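/- Let L/F be a finite separable field extension such that there is an intermediate field F ⊆ F' ⊆ L with [L : F'] = p a prime and F'/F a Galois extension. Let φ = N_{L/F} be the norm form of L/F. Then φ satisfies Scharlau's norm principle for every finite Galois extension K/F whose degree [K : F] is coprime to [F' : F]: if a ∈ K^× is a similarity factor of the extended form N_{(K⊗_F L)/K}, then N_{K/F}(a) is a similarity factor of N_{L/F}. -/

import Mathlib

open TensorProduct

/-!
A similarity factor `a` of the extended form is a value of that form: if `g` is a similitude
with factor `a`, then `a` is the norm of `w = g 1`, because `1` has norm `1`. Computing
`N_{(K ⊗ L)/F}(w)` through both subalgebras `K` and `L` of `K ⊗ L` (transitivity of the norm,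
`Algebra.norm_norm`) gives `N_{K/F}(a) = N_{L/F}(y)` with `y = N_{(K ⊗ L)/L}(w)`. Multiplication
by `y` is then a similitude of `N_{L/F}` with factor `N_{K/F}(a)`.
-/

/-- **SNP for norm forms of separable extensions `L/F` with `[L : F'] = p` prime and
`F'/F` Galois, over Galois extensions of coprime degree.**  Let `L/F` be finite separable
with an intermediate field `F'` such that `[L : F'] = p` is prime and `F'/F` is Galois.
Then the norm form `φ = N_{L/F}` satisfies Scharlau's norm principle for every finite
Galois extension `K/F` with `[K : F]` coprime to `[F' : F]`: if `a ∈ K^×` is a similarity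
factor of the extended form `N_{(K⊗L)/K}`, then `N_{K/F}(a)` is a similarity factor of
`N_{L/F}`. -/
theorem snp_tower_galois_coprime
    (F F' L K : Type*) [Field F] [Field F'] [Field L] [Field K]
    [Algebra F F'] [Algebra F' L] [Algebra F L] [IsScalarTower F F' L]
    [FiniteDimensional F L] [Algebra.IsSeparable F L]
    (p : ℕ) (hp : p.Prime) (hLF' : Module.finrank F' L = p)
    [IsGalois F F']
    [Algebra F K] [FiniteDimensional F K] [IsGalois F K]
    (hcop : Nat.Coprime (Module.finrank F K) (Module.finrank F F')) :
    ∀ a : K, a ≠ 0 →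
      (∃ g : (K ⊗[F] L) ≃ₗ[K] (K ⊗[F] L),
        ∀ z : K ⊗[F] L, Algebra.norm K (g z) = a * Algebra.norm K z) →
      ∃ h : L ≃ₗ[F] L,
        ∀ x : L, Algebra.norm F (h x) = Algebra.norm F a * Algebra.norm F x := by
  intro a ha ⟨g, hg⟩
  let _ : Algebra L (K ⊗[F] L) := Algebra.TensorProduct.rightAlgebra
  have ha1 : Algebra.norm K (g 1) = a := by rw [hg, map_one, mul_one]
  have hy : Algebra.norm F (Algebra.norm L (g 1)) = Algebra.norm F a := by
    rw [Algebra.norm_norm, ← Algebra.norm_norm (S := K), ha1]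
  have hy0 : Algebra.norm L (g 1) ≠ 0 := by
    intro h0
    rw [h0, Algebra.norm_zero] at hy
    exact ha (Algebra.norm_eq_zero_iff.mp hy.symm)
  refine ⟨LinearEquiv.smulOfNeZero L L _ hy0 |>.restrictScalars F, fun x => ?_⟩
  simp [hy]
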